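/- Soundness of rule R12 (Theorem 1, second part): Let H be a partial mixed graph and M a completion of H. Suppose A and B are adjacent in H and the mark at A on the edge A–B is a circle. Let S_A = {A} ∪ {V : V is adjacent to A in H and the edge V–A has an arrowhead at A}. Suppose there is an unbridged path ⟨K_1, …, K_m⟩ relative to S_A lying in H[−S_A], and for every vertex K_i (1 ≤ i ≤ m) there exists an uncovered possible directed path ⟨A, B, …, K_i⟩ in H whose second vertex is B, with B ≠ K_i. Then in M the edge between A and B has an arrowhead at A (in particular, A → B does not hold in M). -/

import Mathlib

/-- Marks at edge ends in a partial mixed graph. -/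
inductive Mark : Type
  | tail
  | arrow
  | circle
deriving DecidableEq

/-- A partial mixed graph (PMG): a symmetric irreflexive adjacency relation together
with, for each ordered pair `(a, b)` of adjacent vertices, a mark `mark a b` at `b` on
the edge `a–b`, such that no edge has tails at both endpoints. -/
structure PMG (V : Type) where
  adj : V → V → Prop
  symm : ∀ a b, adj a b → adj b a
  irrefl : ∀ a, ¬ adj a a
  mark : V → V → Mark
  noDoubleTail : ∀ a b, adj a b → ¬ (mark a b = Mark.tail ∧ mark b a = Mark.tail)

namespace PMG

variable {V : Type}

/-- `a → b`: adjacent, tail at `a`, arrowhead at `b`. -/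
def dir (G : PMG V) (a b : V) : Prop :=
  G.adj a b ∧ G.mark b a = Mark.tail ∧ G.mark a b = Mark.arrow

/-- `a ↔ b`: adjacent, arrowheads at both endpoints. -/
def bidir (G : PMG V) (a b : V) : Prop :=
  G.adj a b ∧ G.mark b a = Mark.arrow ∧ G.mark a b = Mark.arrow

/-- `a` is an ancestor of `b`: `a = b` or there is a directed path from `a` to `b`. -/
def Anc (G : PMG V) (a b : V) : Prop :=
  Relation.ReflTransGen G.dir a b

/-- `a` is an ancestor of some vertex of the set `S`. -/
def AncSet (G : PMG V) (a : V) (S : Set V) : Prop :=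
  ∃ v ∈ S, G.Anc a v

/-- A mixed graph: a PMG with no circle marks. -/
def IsMixed (G : PMG V) : Prop :=
  ∀ a b, G.adj a b → G.mark a b ≠ Mark.circle

/-- Ancestral: no directed cycles and no almost directed cycles. -/
def Ancestral (G : PMG V) : Prop :=
  ∀ a b, G.Anc a b → a ≠ b → ¬ G.dir b a ∧ ¬ G.bidir a b

/-- Unshielded collider `(a, b, c)`: `a, c` both adjacent to `b`, `a` and `c`
distinct and nonadjacent, arrowheads at `b` on both edges. -/
def UnshieldedCollider (G : PMG V) (a b c : V) : Prop :=
  a ≠ c ∧ G.adj a b ∧ G.adj c b ∧ ¬ G.adj a c ∧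
    G.mark a b = Mark.arrow ∧ G.mark c b = Mark.arrow

/-- `M` is a completion of the PMG `H`: same vertices and adjacencies, all non-circle
marks of `H` occur identically in `M`, `M` is an ancestral mixed graph, and every
unshielded collider of `M` is already an unshielded collider of `H`. -/
def Completion (H M : PMG V) : Prop :=
  (∀ a b, M.adj a b ↔ H.adj a b) ∧
  (∀ a b, H.adj a b → H.mark a b ≠ Mark.circle → M.mark a b = H.mark a b) ∧
  M.IsMixed ∧ M.Ancestral ∧
  (∀ a b c, M.UnshieldedCollider a b c → H.UnshieldedCollider a b c)

/-- An edge usable in a possible directed path from `a` to `b`: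
adjacent, no arrowhead at `a`, no tail at `b`. -/
def possEdge (G : PMG V) (a b : V) : Prop :=
  G.adj a b ∧ G.mark b a ≠ Mark.arrow ∧ G.mark a b ≠ Mark.tail

/-- A circle edge: adjacent with circle marks at both endpoints. -/
def circleEdge (G : PMG V) (a b : V) : Prop :=
  G.adj a b ∧ G.mark a b = Mark.circle ∧ G.mark b a = Mark.circle

/-- `p 0, …, p n` is a path: distinct vertices, consecutive ones adjacent. -/
def IsPathOn (G : PMG V) (p : ℕ → V) (n : ℕ) : Prop :=
  (∀ i ≤ n, ∀ j ≤ n, p i = p j → i = j) ∧ ∀ i < n, G.adj (p i) (p (i+1))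

/-- `p 0, …, p n` is a possible directed path. -/
def IsPossDirPathOn (G : PMG V) (p : ℕ → V) (n : ℕ) : Prop :=
  (∀ i ≤ n, ∀ j ≤ n, p i = p j → i = j) ∧ ∀ i < n, G.possEdge (p i) (p (i+1))

/-- `p 0, …, p n` is a circle path. -/
def IsCirclePathOn (G : PMG V) (p : ℕ → V) (n : ℕ) : Prop :=
  (∀ i ≤ n, ∀ j ≤ n, p i = p j → i = j) ∧ ∀ i < n, G.circleEdge (p i) (p (i+1))

/-- The path `p 0, …, p n` is uncovered: any two nonconsecutive neighbours of an
internal vertex are nonadjacent. -/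
def UncoveredOn (G : PMG V) (p : ℕ → V) (n : ℕ) : Prop :=
  ∀ i, i + 2 ≤ n → ¬ G.adj (p i) (p (i+2))

/-- `F_x` relative to `V'`: the vertices of `V'` adjacent to `x` whose edge carries
a circle or an arrowhead at `x`. -/
def Fset (G : PMG V) (V' : Set V) (x : V) : Set V :=
  {v | v ∈ V' ∧ G.adj v x ∧ (G.mark v x = Mark.circle ∨ G.mark v x = Mark.arrow)}

/-- `p 0, …, p n` is an unbridged path relative to `V'` in `G`: an uncovered circle
path with at least one edge, lying in `G[−V']`, with
`F_{p 0} \ F_{p 1} ≠ ∅` and `F_{p n} \ F_{p (n-1)} ≠ ∅`. -/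
def UnbridgedOn (G : PMG V) (V' : Set V) (p : ℕ → V) (n : ℕ) : Prop :=
  1 ≤ n ∧ G.IsCirclePathOn p n ∧ G.UncoveredOn p n ∧
  (∀ i ≤ n, p i ∉ V') ∧
  (G.Fset V' (p 0) \ G.Fset V' (p 1)).Nonempty ∧
  (G.Fset V' (p n) \ G.Fset V' (p (n-1))).Nonempty

/-- The set `S_A`: `A` together with all vertices adjacent to `A` whose edge has an
arrowhead at `A`. -/
def SA (G : PMG V) (A : V) : Set V :=
  {A} ∪ {v | G.adj v A ∧ G.mark v A = Mark.arrow}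

end PMG

/-! An unbridged path relative to `V'` must contain an ancestor of `V'` in every completion.
Otherwise no directed edge leads from its end vertices or their neighbours on the path into `V'`, so
a vertex of `F_{V_0} \ F_{V_1}` has an arrowhead at `V_0` and is not adjacent to `V_1`. As the
completion has no new unshielded collider, this orients `V_0 → V_1`, and the orientation propagates
along the uncovered path. Starting from the other end orients the same edges the opposite way.

If `A → B` held in a completion, it would propagate along the uncovered possible directed paths and
make `A` an ancestor of the vertices on the unbridged path, hence of a member of `S_A`. But the only
descendant of `A` in `S_A` is `A` itself, and so `A` would lie on a directed cycle. -/

namespace PMG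

/-- There is an uncovered possible directed path `⟨a, b, …, c⟩`, as in the premise of R12 that links
`A` to the unbridged path, except that `b = c` is allowed. -/
def UncoveredPossDirPathVia {V : Type} (G : PMG V) (a b c : V) : Prop :=
  ∃ (p : ℕ → V) (n : ℕ), 1 ≤ n ∧ G.IsPossDirPathOn p n ∧ G.UncoveredOn p n ∧
    p 0 = a ∧ p 1 = b ∧ p n = c

section

variable {V : Type} {G : PMG V} {a b : V}

theorem ne_of_adj (hab : G.adj a b) : a ≠ b := by
  rintro rfl
  exact G.irrefl a hab

theorem dir.asymm (hab : G.dir a b) : ¬ G.dir b a := fun hba =>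
  Mark.noConfusion (hba.2.1.symm.trans hab.2.2)

theorem circleEdge.symm (hab : G.circleEdge a b) : G.circleEdge b a :=
  ⟨G.symm a b hab.1, hab.2.2, hab.2.1⟩

theorem circleEdge.possEdge (hab : G.circleEdge a b) : G.possEdge a b :=
  ⟨hab.1, by simp [hab.2.2], by simp [hab.2.1]⟩

theorem IsCirclePathOn.isPossDirPathOn {p : ℕ → V} {n : ℕ} (hp : G.IsCirclePathOn p n) :
    G.IsPossDirPathOn p n :=
  ⟨hp.1, fun i hi => (hp.2 i hi).possEdge⟩

theorem UnbridgedOn.le_of_mem_ends {S : Set V} {q : ℕ → V} {m i : ℕ} (hq : G.UnbridgedOn S q m)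
    (hi : i ∈ ({0, 1, m - 1, m} : Set ℕ)) : i ≤ m := by
  have hm := hq.1
  rcases hi with rfl | rfl | rfl | rfl <;> omega

theorem UncoveredPossDirPathVia.adj {c : V} (h : G.UncoveredPossDirPathVia a b c) :
    G.adj a b := by
  obtain ⟨p, n, hn, hp, -, rfl, rfl, -⟩ := h
  exact (hp.2 0 hn).1

theorem anc_of_forall_dir {p : ℕ → V} {n : ℕ} (h : ∀ i < n, G.dir (p i) (p (i + 1))) :
    G.Anc (p 0) (p n) :=
  (reflTransGen_of_succ_of_le (fun i j => G.dir (p i) (p j)) (fun i hi => h i hi.2)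
    (Nat.zero_le n)).lift p fun _ _ hij => hij

theorem IsMixed.dir_of_mark_ne_arrow (hG : G.IsMixed) (hab : G.adj a b)
    (hmark : G.mark b a ≠ Mark.arrow) : G.dir a b := by
  have hcirc_a := hG b a (G.symm a b hab)
  have hcirc_b := hG a b hab
  have htails := G.noDoubleTail a b hab
  refine ⟨hab, ?_⟩
  cases hb : G.mark a b <;> cases ha : G.mark b a <;> simp_all

theorem Ancestral.mark_ne_arrow (hG : G.Ancestral) (hmixed : G.IsMixed) (hab : G.adj a b)
    (hanc : G.Anc a b) : G.mark b a ≠ Mark.arrow := by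
  intro hmark
  obtain ⟨hdir, hbidir⟩ := hG a b hanc (ne_of_adj hab)
  by_cases hb : G.mark a b = Mark.arrow
  · exact hbidir ⟨hab, hmark, hb⟩
  · exact hdir (hmixed.dir_of_mark_ne_arrow (G.symm a b hab) hb)

theorem Ancestral.anc_antisymm (hG : G.Ancestral) (hab : G.Anc a b) (hba : G.Anc b a) :
    a = b := by
  rcases Relation.ReflTransGen.cases_tail hba with heq | ⟨c, hbc, hca⟩
  · exact heq
  · exact absurd hca (hG a c (hab.trans hbc) (ne_of_adj hca.1).symm).1

end

namespace Completion

variable {V : Type} {H M : PMG V} {a b c : V}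

theorem adj_iff (h : Completion H M) : M.adj a b ↔ H.adj a b := h.1 a b

theorem mark_eq (h : Completion H M) (hab : H.adj a b) (hmark : H.mark a b ≠ Mark.circle) :
    M.mark a b = H.mark a b :=
  h.2.1 a b hab hmark

theorem isMixed (h : Completion H M) : M.IsMixed := h.2.2.1

theorem ancestral (h : Completion H M) : M.Ancestral := h.2.2.2.1

theorem unshieldedCollider (h : Completion H M) (habc : M.UnshieldedCollider a b c) :
    H.UnshieldedCollider a b c :=
  h.2.2.2.2 a b c habc

theorem dir_of_mark_ne_arrow (h : Completion H M) (hab : H.adj a b)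
    (hmark : M.mark b a ≠ Mark.arrow) : M.dir a b :=
  h.isMixed.dir_of_mark_ne_arrow (h.adj_iff.mpr hab) hmark

theorem dir_of_mark_eq_tail (h : Completion H M) (hab : H.adj a b)
    (hmark : H.mark b a = Mark.tail) : M.dir a b := by
  apply h.dir_of_mark_ne_arrow hab
  rw [h.mark_eq (H.symm a b hab) (by simp [hmark]), hmark]
  exact Mark.noConfusion

theorem dir_of_arrow_of_not_adj (h : Completion H M) (hab : H.adj a b) (hbc : H.adj b c)
    (hne : a ≠ c) (hac : ¬ H.adj a c) (harrow : M.mark a b = Mark.arrow)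
    (hmark : H.mark c b ≠ Mark.arrow) : M.dir b c := by
  refine h.dir_of_mark_ne_arrow hbc fun harrow' => ?_
  have hcollider : M.UnshieldedCollider a b c :=
    ⟨hne, h.adj_iff.mpr hab, h.adj_iff.mpr (H.symm b c hbc), mt h.adj_iff.mp hac, harrow, harrow'⟩
  obtain ⟨-, -, -, -, -, hcb⟩ := h.unshieldedCollider hcollider
  exact hmark hcb

theorem dir_of_isPossDirPathOn (h : Completion H M) {p : ℕ → V} {n : ℕ}
    (hp : H.IsPossDirPathOn p n) (huncov : H.UncoveredOn p n) (hdir : M.dir (p 0) (p 1)) :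
    ∀ i < n, M.dir (p i) (p (i + 1)) := by
  intro i
  induction i with
  | zero => exact fun _ => hdir
  | succ i ih =>
    intro hi
    have hne : p i ≠ p (i + 2) := fun heq => by
      have := hp.1 i (by omega) (i + 2) hi heq
      omega
    obtain ⟨hadj, hmark, -⟩ := hp.2 (i + 1) hi
    exact h.dir_of_arrow_of_not_adj (hp.2 i (by omega)).1 hadj hne (huncov i hi)
      (ih (by omega)).2.2 hmark

theorem anc_of_uncoveredPossDirPathVia (h : Completion H M) (hab : M.dir a b)
    (hpath : H.UncoveredPossDirPathVia a b c) : M.Anc a c := by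
  obtain ⟨p, n, -, hp, huncov, rfl, rfl, rfl⟩ := hpath
  exact anc_of_forall_dir (h.dir_of_isPossDirPathOn hp huncov hab)

theorem dir_of_Fset_diff_nonempty (h : Completion H M) {S : Set V} (hab : H.adj a b)
    (hmark : H.mark b a ≠ Mark.arrow) (ha : ¬ M.AncSet a S) (hb : ¬ M.AncSet b S)
    (hF : (H.Fset S a \ H.Fset S b).Nonempty) : M.dir a b := by
  obtain ⟨x, ⟨hxS, hxa, -⟩, hxb⟩ := hF
  have harrow : M.mark x a = Mark.arrow := by
    by_contra hxa_mark
    exact ha ⟨x, hxS, .single (h.dir_of_mark_ne_arrow (H.symm x a hxa) hxa_mark)⟩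
  have hnot_adj : ¬ H.adj x b := by
    intro hadj
    have htail : H.mark x b = Mark.tail := by
      cases hm : H.mark x b with
      | tail => rfl
      | circle => exact absurd ⟨hxS, hadj, .inl hm⟩ hxb
      | arrow => exact absurd ⟨hxS, hadj, .inr hm⟩ hxb
    exact hb ⟨x, hxS, .single (h.dir_of_mark_eq_tail (H.symm x b hadj) htail)⟩
  have hne : x ≠ b := by
    rintro rfl
    exact hb ⟨x, hxS, .refl⟩
  exact h.dir_of_arrow_of_not_adj hxa hab hne hnot_adj harrow hmark

theorem exists_ancSet_of_unbridgedOn (h : Completion H M) {S : Set V} {q : ℕ → V} {m : ℕ}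
    (hq : H.UnbridgedOn S q m) : ∃ i ∈ ({0, 1, m - 1, m} : Set ℕ), M.AncSet (q i) S := by
  by_contra! hanc
  obtain ⟨hm, hcircle, huncov, -, hfirst, hlast⟩ := hq
  obtain ⟨k, rfl⟩ := Nat.exists_eq_add_of_le' hm
  rw [Nat.add_sub_cancel] at hanc hlast
  have hfirst_edge : H.possEdge (q 0) (q 1) := (hcircle.2 0 hm).possEdge
  have hlast_edge : H.possEdge (q (k + 1)) (q k) := (hcircle.2 k k.lt_succ_self).symm.possEdge
  have hforward : M.dir (q 0) (q 1) :=
    h.dir_of_Fset_diff_nonempty hfirst_edge.1 hfirst_edge.2.1 (hanc 0 (by simp))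
      (hanc 1 (by simp)) hfirst
  have hbackward : M.dir (q (k + 1)) (q k) :=
    h.dir_of_Fset_diff_nonempty hlast_edge.1 hlast_edge.2.1 (hanc (k + 1) (by simp))
      (hanc k (by simp)) hlast
  exact hbackward.asymm
    (h.dir_of_isPossDirPathOn hcircle.isPossDirPathOn huncov hforward k k.lt_succ_self)

theorem eq_of_anc_of_mem_SA (h : Completion H M) (hab : M.Anc a b) (hb : b ∈ H.SA a) :
    a = b := by
  rcases hb with heq | ⟨hadj, harrow⟩
  · exact heq.symm
  · have harrow' : M.mark b a = Mark.arrow := by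
      rw [h.mark_eq hadj (by simp [harrow]), harrow]
    exact absurd harrow'
      (h.ancestral.mark_ne_arrow h.isMixed (h.adj_iff.mpr (H.symm b a hadj)) hab)

theorem not_ancSet_SA_of_anc (h : Completion H M) (hab : M.Anc a b) (hb : b ∉ H.SA a) :
    ¬ M.AncSet b (H.SA a) := by
  rintro ⟨x, hx, hbx⟩
  obtain rfl : a = x := h.eq_of_anc_of_mem_SA (hab.trans hbx) hx
  obtain rfl : a = b := h.ancestral.anc_antisymm hab hbx
  exact hb hx

end Completion

end PMG

theorem R12_sound_general {V : Type} {H M : PMG V} (hHM : PMG.Completion H M) {A B : V}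
    {q : ℕ → V} {m : ℕ} (hub : H.UnbridgedOn (H.SA A) q m)
    (hpaths : ∀ i ∈ ({0, 1, m - 1, m} : Set ℕ), H.UncoveredPossDirPathVia A B (q i)) :
    M.mark B A = Mark.arrow ∧ ¬ M.dir A B := by
  have hdir : ¬ M.dir A B := by
    intro hAB
    obtain ⟨i, hi, hanc⟩ := hHM.exists_ancSet_of_unbridgedOn hub
    have havoid : q i ∉ H.SA A := hub.2.2.2.1 i (hub.le_of_mem_ends hi)
    have hA : M.Anc A (q i) := hHM.anc_of_uncoveredPossDirPathVia hAB (hpaths i hi)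
    exact hHM.not_ancSet_SA_of_anc hA havoid hanc
  have hadj : H.adj A B := (hpaths 0 (by simp)).adj
  exact ⟨by_contra fun hmark => hdir (hHM.dir_of_mark_ne_arrow hadj hmark), hdir⟩

/-- **Soundness of rule R12.** If `A ∘–* B` in the PMG `H`, there is an unbridged
path `⟨K_1, …, K_m⟩` relative to `S_A` lying in `H[−S_A]`, and for every vertex
`K_i` of that path there is an uncovered possible directed path `⟨A, B, …, K_i⟩`
in `H` whose second vertex is `B` (with `B ≠ K_i`), then every completion `M` of
`H` has an arrowhead at `A` on the edge `A–B` (in particular `A → B` does not hold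
in `M`). -/
theorem R12_sound {V : Type} (H M : PMG V) (hHM : PMG.Completion H M)
    (A B : V) (hadj : H.adj A B) (hcirc : H.mark B A = Mark.circle)
    (q : ℕ → V) (m : ℕ) (hub : H.UnbridgedOn (H.SA A) q m)
    (hpaths : ∀ i ≤ m, ∃ (p : ℕ → V) (n : ℕ), 1 ≤ n ∧
      H.IsPossDirPathOn p n ∧ H.UncoveredOn p n ∧
      p 0 = A ∧ p 1 = B ∧ p n = q i ∧ B ≠ q i) :
    M.mark B A = Mark.arrow ∧ ¬ M.dir A B := by
  refine R12_sound_general hHM hub fun i hi => ?_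
  obtain ⟨p, n, hn, hp, huncov, h0, h1, hend, -⟩ := hpaths i (hub.le_of_mem_ends hi)
  exact ⟨p, n, hn, hp, huncov, h0, h1, hend⟩
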